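/- There are exactly two pairs (X₁, X₂) of positive real numbers satisfying the Einstein system with parameters γ₁ = 5/9, γ₂ = 1/9, b₁ = 1/36, b₂ = 1/4, r = 1/2. (This is the algebraic content of the theorem: the bisymmetric fibration of Type II corresponding to the triple (𝔢₇, 𝔰𝔬₁₂ ⊕ 𝔰𝔲₂, 𝔰𝔬₆ ⊕ 𝔰𝔬₆ ⊕ ℝ) admits, up to homothety, exactly two Einstein adapted metrics.) -/

import Mathlib

/-- The Einstein system (E1)–(E2) for a Type II bisymmetric fibration,
in unknowns `X₁ X₂` with parameters `γ₁ γ₂ b₁ b₂ r`. -/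
def EinsteinSystem (γ₁ γ₂ b₁ b₂ r X₁ X₂ : ℝ) : Prop :=
  2*γ₁*X₁^2*X₂ + (1-γ₁)*X₂ - 2*γ₂*X₁*X₂^2 - (1-γ₂)*X₁ = 0 ∧
  2*b₁*X₂ + 2*b₂*X₁ - 4*r*X₁*X₂ + 2*γ₁*X₁^2*X₂ + (1-γ₁)*X₂ = 0

/-- Up to a factor, the quartic obtained from the Einstein system by eliminating `X₂`. -/
def einsteinQuartic (x : ℝ) : ℝ :=
  1250 * x ^ 4 - 3690 * x ^ 3 + 3735 * x ^ 2 - 1620 * x + 243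

theorem hasDerivAt_einsteinQuartic (x : ℝ) :
    HasDerivAt einsteinQuartic (5000 * x ^ 3 - 11070 * x ^ 2 + 7470 * x - 1620) x := by
  have h := (((((hasDerivAt_pow 4 x).const_mul 1250).sub
    ((hasDerivAt_pow 3 x).const_mul 3690)).add ((hasDerivAt_pow 2 x).const_mul 3735)).sub
    ((hasDerivAt_id x).const_mul 1620)).add_const 243
  refine HasDerivAt.congr_deriv (f := einsteinQuartic) h ?_
  norm_num
  ring

theorem continuous_einsteinQuartic : Continuous einsteinQuartic := by
  unfold einsteinQuartic
  fun_prop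

theorem strictAntiOn_einsteinQuartic :
    StrictAntiOn einsteinQuartic (Set.Icc (3 / 10) (2 / 5)) := by
  refine strictAntiOn_of_deriv_neg (convex_Icc _ _) continuous_einsteinQuartic.continuousOn ?_
  intro x hx
  rw [interior_Icc] at hx
  obtain ⟨h₁, h₂⟩ := hx
  rw [(hasDerivAt_einsteinQuartic x).deriv]
  nlinarith [mul_pos (sub_pos.2 h₁) (sub_pos.2 h₂), sq_nonneg (x - 2 / 5),
    mul_nonneg (sub_pos.2 h₁).le (sq_nonneg (x - 2 / 5))]

theorem strictMonoOn_einsteinQuartic :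
    StrictMonoOn einsteinQuartic (Set.Icc (6 / 5) (3 / 2)) := by
  refine strictMonoOn_of_deriv_pos (convex_Icc _ _) continuous_einsteinQuartic.continuousOn ?_
  intro x hx
  rw [interior_Icc] at hx
  obtain ⟨h₁, h₂⟩ := hx
  rw [(hasDerivAt_einsteinQuartic x).deriv]
  have h : 0 < x - 6 / 5 := sub_pos.2 h₁
  nlinarith [pow_pos h 2, pow_pos h 3]

theorem einsteinQuartic_neg {x : ℝ} (h₁ : 2 / 5 ≤ x) (h₂ : x ≤ 6 / 5) :
    einsteinQuartic x < 0 := by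
  have h := mul_nonneg (sub_nonneg.2 h₁) (sub_nonneg.2 h₂)
  unfold einsteinQuartic
  nlinarith [mul_nonneg h (sq_nonneg (x - 4 / 5)), mul_nonneg h (sq_nonneg (x - 3 / 5)),
    mul_nonneg h (sq_nonneg (x - 1 / 2)), mul_nonneg h (sq_nonneg (x - 7 / 10)), h]

/-- The positive solutions are parametrised by the roots of the quartic in `(3/10, 3/2)`. -/
theorem einsteinSystem_pos_iff (x y : ℝ) :
    (0 < x ∧ 0 < y ∧ EinsteinSystem (5/9) (1/9) (1/36) (1/4) (1/2) x y) ↔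
      (3 / 10 < x ∧ x < 3 / 2 ∧ einsteinQuartic x = 0) ∧
        y = 9 * x / (36 * x - 9 - 20 * x ^ 2) := by
  unfold EinsteinSystem einsteinQuartic
  constructor
  · rintro ⟨hx, hy, h₁, h₂⟩
    have hD : y * (36 * x - 9 - 20 * x ^ 2) = 9 * x := by linarith
    have hpos : 0 < 36 * x - 9 - 20 * x ^ 2 :=
      pos_of_mul_pos_right (by rw [hD]; positivity) hy.le
    have hy' : y = 9 * x / (36 * x - 9 - 20 * x ^ 2) := by
      rw [eq_div_iff hpos.ne', hD]
    refine ⟨⟨by nlinarith, by nlinarith, ?_⟩, hy'⟩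
    have : x * (1250 * x ^ 4 - 3690 * x ^ 3 + 3735 * x ^ 2 - 1620 * x + 243) = 0 := by
      linear_combination (-9 / 4) * (36 * x - 9 - 20 * x ^ 2) ^ 2 * h₁ +
        (1 / 4) * ((10 * x ^ 2 + 4) * (36 * x - 9 - 20 * x ^ 2) -
          2 * x * (y * (36 * x - 9 - 20 * x ^ 2) + 9 * x)) * hD
    exact (mul_eq_zero.1 this).resolve_left hx.ne'
  · rintro ⟨⟨hl, hu, hq⟩, hy⟩
    have hpos : 0 < 36 * x - 9 - 20 * x ^ 2 := by nlinarith
    have hx : 0 < x := by linarith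
    have hD : y * (36 * x - 9 - 20 * x ^ 2) = 9 * x := (eq_div_iff hpos.ne').1 hy
    refine ⟨hx, by rw [hy]; positivity, ?_, by linarith⟩
    refine (mul_eq_zero.1 ?_).resolve_left (pow_ne_zero 2 hpos.ne')
    linear_combination (1 / 9) * ((10 * x ^ 2 + 4) * (36 * x - 9 - 20 * x ^ 2) -
      2 * x * (y * (36 * x - 9 - 20 * x ^ 2) + 9 * x)) * hD - (4 / 9) * x * hq

theorem exists_einsteinQuartic_roots : ∃ a b : ℝ, a ≠ b ∧
    {x : ℝ | 3 / 10 < x ∧ x < 3 / 2 ∧ einsteinQuartic x = 0} = {a, b} := by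
  obtain ⟨a, ha, ha₀⟩ := intermediate_value_Ioo' (by norm_num : (3 / 10 : ℝ) ≤ 2 / 5)
    continuous_einsteinQuartic.continuousOn
    (show (0 : ℝ) ∈ Set.Ioo _ _ by constructor <;> norm_num [einsteinQuartic])
  obtain ⟨b, hb, hb₀⟩ := intermediate_value_Ioo (by norm_num : (6 / 5 : ℝ) ≤ 3 / 2)
    continuous_einsteinQuartic.continuousOn
    (show (0 : ℝ) ∈ Set.Ioo _ _ by constructor <;> norm_num [einsteinQuartic])
  refine ⟨a, b, by linarith [ha.2, hb.1] |> ne_of_lt, ?_⟩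
  ext x
  simp only [Set.mem_ofPred_eq, Set.mem_insert_iff, Set.mem_singleton_iff]
  constructor
  · rintro ⟨hl, hu, hx⟩
    rcases le_total x (2 / 5) with h | h
    · exact Or.inl (strictAntiOn_einsteinQuartic.injOn ⟨hl.le, h⟩ ⟨ha.1.le, ha.2.le⟩
        (hx.trans ha₀.symm))
    · rcases le_total x (6 / 5) with h' | h'
      · exact absurd hx (einsteinQuartic_neg h h').ne
      · exact Or.inr (strictMonoOn_einsteinQuartic.injOn ⟨h', hu.le⟩ ⟨hb.1.le, hb.2.le⟩
          (hx.trans hb₀.symm))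
  · rintro (rfl | rfl)
    · exact ⟨ha.1, by linarith [ha.2], ha₀⟩
    · exact ⟨by linarith [hb.1], hb.2, hb₀⟩

/- STATEMENT 7: exactly two positive solutions for (𝔢₇, 𝔰𝔬₁₂⊕𝔰𝔲₂, 𝔰𝔬₆⊕𝔰𝔬₆⊕ℝ). -/
theorem e7_p6_exactly_two_einstein_adapted_metrics :
    {P : ℝ × ℝ | 0 < P.1 ∧ 0 < P.2 ∧
      EinsteinSystem (5/9) (1/9) (1/36) (1/4) (1/2) P.1 P.2}.ncard = 2 := by
  obtain ⟨a, b, hab, hroots⟩ := exists_einsteinQuartic_roots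
  have himage : {P : ℝ × ℝ | 0 < P.1 ∧ 0 < P.2 ∧
      EinsteinSystem (5/9) (1/9) (1/36) (1/4) (1/2) P.1 P.2} =
      (fun x : ℝ => (x, 9 * x / (36 * x - 9 - 20 * x ^ 2))) ''
        {x : ℝ | 3 / 10 < x ∧ x < 3 / 2 ∧ einsteinQuartic x = 0} := by
    ext ⟨x, y⟩
    simp only [Set.mem_ofPred_eq, einsteinSystem_pos_iff, Set.mem_image, Prod.mk.injEq]
    constructor
    · rintro ⟨h, rfl⟩
      exact ⟨x, h, rfl, rfl⟩
    · rintro ⟨_, h, rfl, rfl⟩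
      exact ⟨h, rfl⟩
  rw [himage, Set.ncard_image_of_injective _ fun _ _ h => congrArg Prod.fst h, hroots,
    Set.ncard_pair hab]
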